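/- Let A ∈ ℝ^{n×n} have bandwidth at most m, i.e., A i j = 0 whenever |i - j| > m, and suppose all leading principal minors of A are nonzero. Then there exist matrices L, U ∈ ℝ^{n×n} with A = L * U such that L is lower triangular with unit diagonal, U is upper triangular and invertible, and both L and U have bandwidth at most m (L i j = 0 whenever i - j > m or j > i, and U i j = 0 whenever j - i > m or i > j). -/

import Mathlib

open Matrix in
theorem exists_LU_aux : ∀ (n : ℕ) (A : Matrix (Fin n) (Fin n) ℝ)
    (_ : ∀ (k : ℕ) (hk : k ≤ n),
      (A.submatrix (Fin.castLE hk) (Fin.castLE hk)).det ≠ 0),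
    ∃ L U : Matrix (Fin n) (Fin n) ℝ,
      A = L * U ∧
      (∀ i : Fin n, L i i = 1) ∧
      (∀ i j : Fin n, (i : ℕ) < (j : ℕ) → L i j = 0) ∧
      (∀ i j : Fin n, (j : ℕ) < (i : ℕ) → U i j = 0) := by
  intro n
  induction n with
  | zero =>
    intro A _
    exact ⟨0, 0, by ext i; exact i.elim0, fun i => i.elim0, fun i => i.elim0, fun i => i.elim0⟩
  | succ n ih =>
    intro A h
    obtain ⟨L, U, hA, hL1, hL, hU⟩ := ih (A.submatrix Fin.castSucc Fin.castSucc)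
      (fun k hk => h k (hk.trans n.le_succ))
    have hd : (A.submatrix Fin.castSucc Fin.castSucc).det ≠ 0 := h n n.le_succ
    rw [hA, det_mul] at hd
    have hLu : IsUnit L.det := (left_ne_zero_of_mul hd).isUnit
    have hUu : IsUnit U.det := (right_ne_zero_of_mul hd).isUnit
    obtain ⟨r, hr⟩ : ∃ r : Fin n → ℝ, r ᵥ* U = fun j => A (Fin.last n) j.castSucc :=
      ⟨(fun j => A (Fin.last n) j.castSucc) ᵥ* U⁻¹, by
        rw [vecMul_vecMul, nonsing_inv_mul _ hUu, vecMul_one]⟩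
    obtain ⟨c, hc⟩ : ∃ c : Fin n → ℝ, L *ᵥ c = fun i => A i.castSucc (Fin.last n) :=
      ⟨L⁻¹ *ᵥ (fun i => A i.castSucc (Fin.last n)), by
        rw [mulVec_mulVec, mul_nonsing_inv _ hLu, one_mulVec]⟩
    refine ⟨Matrix.of fun i j => Fin.lastCases (motive := fun _ => ℝ)
        (Fin.lastCases (motive := fun _ => ℝ) 1 (fun j => r j) j)
        (fun i => Fin.lastCases (motive := fun _ => ℝ) 0 (fun j => L i j) j) i,
      Matrix.of fun i j => Fin.lastCases (motive := fun _ => ℝ)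
        (Fin.lastCases (motive := fun _ => ℝ) (A (Fin.last n) (Fin.last n) - ∑ k, r k * c k)
          (fun _ => 0) j)
        (fun i => Fin.lastCases (motive := fun _ => ℝ) (c i) (fun j => U i j) j) i,
      ?_, ?_, ?_, ?_⟩
    · ext i j
      rw [Matrix.mul_apply, Fin.sum_univ_castSucc]
      refine Fin.lastCases ?_ (fun i => ?_) i <;> refine Fin.lastCases ?_ (fun j => ?_) j
      · simp
      · have := congrFun hr j
        simp [vecMul, dotProduct] at this ⊢
        exact this.symm
      · have := congrFun hc i
        simp [mulVec, dotProduct] at this ⊢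
        exact this.symm
      · have := congrFun (congrFun hA i) j
        simp [Matrix.mul_apply] at this ⊢
        exact this
    · intro i
      refine Fin.lastCases ?_ (fun i => ?_) i <;> simp [hL1]
    · intro i j
      refine Fin.lastCases ?_ (fun i => ?_) i <;> refine Fin.lastCases ?_ (fun j => ?_) j
      · simp
      · intro hh; simp at hh; omega
      · simp
      · simpa using hL i j
    · intro i j
      refine Fin.lastCases ?_ (fun i => ?_) i <;> refine Fin.lastCases ?_ (fun j => ?_) j
      · simp
      · simp
      · intro hh; simp at hh; omega
      · simpa using hU i j

/-- Banded LU factorization: if `A ∈ ℝ^{n×n}` has bandwidth at most `m`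
(`A i j = 0` whenever `|i - j| > m`) and all leading principal minors of `A`
are nonzero, then `A = L * U` where `L` is lower triangular with unit diagonal,
`U` is upper triangular and invertible, and both `L` and `U` have bandwidth at
most `m`. -/
theorem banded_LU_factorization {n : ℕ} (m : ℕ) (A : Matrix (Fin n) (Fin n) ℝ)
    (hband : ∀ i j : Fin n, (m : ℤ) < |(i : ℤ) - (j : ℤ)| → A i j = 0)
    (hminors : ∀ (k : ℕ) (hk : k ≤ n),
      (A.submatrix (Fin.castLE hk) (Fin.castLE hk)).det ≠ 0) :
    ∃ L U : Matrix (Fin n) (Fin n) ℝ,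
      A = L * U ∧
      (∀ i : Fin n, L i i = 1) ∧
      (∀ i j : Fin n, (i : ℕ) < (j : ℕ) → L i j = 0) ∧
      (∀ i j : Fin n, (j : ℕ) < (i : ℕ) → U i j = 0) ∧
      IsUnit U ∧
      (∀ i j : Fin n, (m : ℤ) < (i : ℤ) - (j : ℤ) → L i j = 0) ∧
      (∀ i j : Fin n, (m : ℤ) < (j : ℤ) - (i : ℤ) → U i j = 0) := by
  obtain ⟨L, U, hA, hL1, hL, hU⟩ := exists_LU_aux n A hminors
  have hd : A.det ≠ 0 := hminors n le_rfl
  rw [hA, Matrix.det_mul] at hd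
  have hUd : U.det ≠ 0 := right_ne_zero_of_mul hd
  have hdiag : ∀ j, U j j ≠ 0 := by
    have ht : U.BlockTriangular id := fun i j hij => hU i j hij
    rw [Matrix.det_of_upperTriangular ht, Finset.prod_ne_zero_iff] at hUd
    exact fun j => hUd j (Finset.mem_univ j)
  refine ⟨L, U, hA, hL1, hL, hU, (Matrix.isUnit_iff_isUnit_det U).2 hUd.isUnit, ?_, ?_⟩
  · intro i j
    induction j using WellFoundedLT.induction with
    | ind j ih =>
    intro hij
    have h0 : A i j = 0 := hband i j (lt_of_lt_of_le hij (le_abs_self _))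
    rw [hA, Matrix.mul_apply, Finset.sum_eq_single j] at h0
    · exact (mul_eq_zero.1 h0).resolve_right (hdiag j)
    · intro k _ hk
      rcases lt_or_gt_of_ne hk with hk | hk
      · have hk' : (k : ℕ) < j := hk
        rw [ih k hk (by omega), zero_mul]
      · rw [hU k j hk, mul_zero]
    · simp
  · intro i j
    induction i using WellFoundedLT.induction with
    | ind i ih =>
    intro hij
    have h0 : A i j = 0 := hband i j (by rw [abs_sub_comm]; exact lt_of_lt_of_le hij (le_abs_self _))
    rw [hA, Matrix.mul_apply, Finset.sum_eq_single i] at h0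
    · simpa [hL1] using h0
    · intro k _ hk
      rcases lt_or_gt_of_ne hk with hk | hk
      · have hk' : (k : ℕ) < i := hk
        rw [ih k hk (by omega), mul_zero]
      · rw [hL i k hk, zero_mul]
    · simp
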